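/- Define f(x) = (x+1) log₂(x+1) − x log₂ x for x > 0, with f(0) = 0, and let h₂ be the binary entropy function. Then: (a) f is strictly increasing on [0, ∞); and (b) for every real E > 0 there exist ε > 0 and α₀ ∈ (0, min(1/2, E)) such that f(E − α) − h₂(α) > ε for all α ∈ (0, α₀]. -/

import Mathlib

noncomputable section

/-- `f(x) = (x+1) log₂ (x+1) − x log₂ x` (with the convention `0 · log₂ 0 = 0`,
so that `f 0 = 0`). -/
def fNG (x : ℝ) : ℝ := (x + 1) * Real.logb 2 (x + 1) - x * Real.logb 2 x

/-- Binary entropy function. -/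
def binEnt (x : ℝ) : ℝ := -(x * Real.logb 2 x) - (1 - x) * Real.logb 2 (1 - x)

theorem fNG_eq (x : ℝ) :
    fNG x = ((x + 1) * Real.log (x + 1) - x * Real.log x) / Real.log 2 := by
  unfold fNG Real.logb
  ring

theorem continuous_fNG : Continuous fNG := by
  have h : fNG = fun x => ((x + 1) * Real.log (x + 1) - x * Real.log x) / Real.log 2 :=
    funext fNG_eq
  rw [h]
  have h1 : Continuous fun x : ℝ => (x + 1) * Real.log (x + 1) :=
    Real.continuous_mul_log.comp (continuous_id.add continuous_const)
  exact (h1.sub Real.continuous_mul_log).div_const _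

theorem continuous_binEnt : Continuous binEnt := by
  have h : binEnt = fun x =>
      (-(x * Real.log x) - (1 - x) * Real.log (1 - x)) / Real.log 2 := by
    funext x
    unfold binEnt Real.logb
    ring
  rw [h]
  have h1 : Continuous fun x : ℝ => (1 - x) * Real.log (1 - x) :=
    Real.continuous_mul_log.comp (continuous_const.sub continuous_id)
  exact (Real.continuous_mul_log.neg.sub h1).div_const _

theorem strictMonoOn_fNG : StrictMonoOn fNG (Set.Ici 0) := by
  apply strictMonoOn_of_deriv_pos (convex_Ici 0) continuous_fNG.continuousOn
  intro x hx
  rw [interior_Ici] at hx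
  have hx0 : 0 < x := hx
  have h2 : 0 < Real.log 2 := Real.log_pos (by norm_num)
  have h1 : HasDerivAt (fun x : ℝ => (x + 1) * Real.log (x + 1)) (Real.log (x + 1) + 1) x :=
    (Real.hasDerivAt_mul_log (x := x + 1) (by positivity)).comp_add_const x 1
  have h3 : HasDerivAt fNG
      (((Real.log (x + 1) + 1) - (Real.log x + 1)) / Real.log 2) x := by
    have h : fNG = fun x => ((x + 1) * Real.log (x + 1) - x * Real.log x) / Real.log 2 :=
      funext fNG_eq
    rw [h]
    exact (h1.sub (Real.hasDerivAt_mul_log hx0.ne')).div_const _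
  rw [h3.deriv]
  have := Real.log_lt_log hx0 (lt_add_one x)
  apply div_pos _ h2
  linarith

/-- `f` is strictly increasing on `[0, ∞)`, and for every `E > 0` there are
`ε > 0` and `α₀ ∈ (0, min (1/2) E)` with `f (E − α) − h₂ α > ε` for all `α ∈ (0, α₀]`. -/
theorem fNG_strictMono_and_gap :
    StrictMonoOn fNG (Set.Ici 0) ∧
    ∀ E : ℝ, 0 < E → ∃ ε > 0, ∃ α₀ : ℝ, 0 < α₀ ∧ α₀ < min (1 / 2) E ∧
      ∀ α ∈ Set.Ioc 0 α₀, fNG (E - α) - binEnt α > ε := by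
  refine ⟨strictMonoOn_fNG, fun E hE => ?_⟩
  have hf : 0 < fNG E := by
    have h := strictMonoOn_fNG (Set.mem_Ici.2 le_rfl) (Set.mem_Ici.2 hE.le) hE
    simpa [fNG_eq 0] using h
  have hc : Continuous fun α => fNG (E - α) - binEnt α :=
    (continuous_fNG.comp (continuous_const.sub continuous_id)).sub continuous_binEnt
  have h0 : fNG E / 2 < fNG (E - 0) - binEnt 0 := by
    simp [binEnt]
    linarith
  have hev := hc.continuousAt.eventually (lt_mem_nhds h0)
  obtain ⟨δ, hδ, hball⟩ := Metric.eventually_nhds_iff.1 hev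
  have hm : 0 < min δ (min (1 / 2) E) := by positivity
  refine ⟨fNG E / 2, by positivity, min δ (min (1 / 2) E) / 2, by positivity, ?_, ?_⟩
  · have := min_le_right δ (min (1 / 2) E)
    linarith
  · rintro α ⟨ha, hb⟩
    apply hball
    rw [Real.dist_eq, sub_zero, abs_of_pos ha]
    have := min_le_left δ (min (1 / 2) E)
    linarith

end
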